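/- Let X = (x_{ij}) be an m×n matrix with positive real entries, let ȳ_{i,j,k} be the associated noncrossing-lattice-path generating sums, let rect(i,j) := Π_{r ≤ i, s ≤ j} x_{rs}, and define ỹ_{i,j,k} := ȳ_{i,j,k} / rect(i,j). Then: (1) ỹ_{i,j,0} = 1/rect(i,j) for all 1 ≤ i ≤ m, 1 ≤ j ≤ n; (2) ỹ_{i,j,min(i,j)} = 1 for all 1 ≤ i ≤ m, 1 ≤ j ≤ n; and (3) for all 2 ≤ i ≤ m, 2 ≤ j ≤ n and 1 ≤ k ≤ min(i,j) − 1, the octahedron recurrence holds: ỹ_{i,j,k} · ỹ_{i−1,j−1,k−1} = ỹ_{i−1,j,k} · ỹ_{i,j−1,k−1} + ỹ_{i−1,j,k−1} · ỹ_{i,j−1,k}. -/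

import Mathlib

/-- One step of a lattice path: exactly one coordinate increases by exactly `1`. -/
def GridStep (u v : ℕ × ℕ) : Prop := v = (u.1 + 1, u.2) ∨ v = (u.1, u.2 + 1)

/-- `p` is a lattice path in `{1,…,m} × {1,…,n}` from `src` to `tgt`. -/
def IsGridPath (m n : ℕ) (src tgt : ℕ × ℕ) (p : List (ℕ × ℕ)) : Prop :=
  p.head? = some src ∧ p.getLast? = some tgt ∧
  (∀ v ∈ p, 1 ≤ v.1 ∧ v.1 ≤ m ∧ 1 ≤ v.2 ∧ v.2 ≤ n) ∧
  List.Chain' GridStep p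

/-- A tuple of pairwise vertex-disjoint lattice paths in `{1,…,m} × {1,…,n}`, the `l`-th one
going from the `l`-th entry of `src` to the `l`-th entry of `tgt`. -/
structure NCTuple (m n : ℕ) (src tgt : List (ℕ × ℕ)) where
  path : List (List (ℕ × ℕ))
  hlen : path.length = src.length
  hlen' : path.length = tgt.length
  valid : ∀ l, l < path.length →
    IsGridPath m n (src.getD l (0, 0)) (tgt.getD l (0, 0)) (path.getD l [])
  disj : ∀ l l', l < path.length → l' < path.length → l ≠ l' →
    ∀ v ∈ path.getD l [], v ∉ path.getD l' []

/-- `ȳ_{i,j,k}`: the sum over all `k`-tuples `(π_1,…,π_k)` of pairwise vertex-disjoint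
lattice paths, with `π_l` going from `(1,l)` to `(i, j-k+l)`, of
`Π_l Π_{(r,s) ∈ π_l} x_{r,s}`. -/
noncomputable def ybar (m n : ℕ) (x : ℕ → ℕ → ℝ) (i j k : ℕ) : ℝ :=
  ∑ᶠ T : NCTuple m n ((List.range k).map fun l => (1, l + 1))
      ((List.range k).map fun l => (i, j - k + (l + 1))),
    (T.path.map fun p => (p.map fun v => x v.1 v.2).prod).prod

/-- `rect(i,j) = Π_{r ≤ i, s ≤ j} x_{rs}`. -/
noncomputable def rectProd (x : ℕ → ℕ → ℝ) (i j : ℕ) : ℝ :=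
  ∏ r ∈ Finset.Icc 1 i, ∏ s ∈ Finset.Icc 1 j, x r s

/-- `ỹ_{i,j,k} := ȳ_{i,j,k} / rect(i,j)`. -/
noncomputable def ytilde (m n : ℕ) (x : ℕ → ℕ → ℝ) (i j k : ℕ) : ℝ :=
  ybar m n x i j k / rectProd x i j

/-!
The Lindström–Gessel–Viennot lemma turns `ȳ_{i,j,k}` into the minor on the rows
`j - k + 1, …, j` and the first `k` columns of the matrix whose row `c` lists the path sums from
the sources `(1, t)` to `(i, c)`. Splitting off the last step of a path relates the rows `v c` for
`i + 1` to the rows `u c` for `i` by `v (c + 1) = x (i + 1) (c + 1) • (u (c + 1) + v c)`. Row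
operations therefore express all six minors in the octahedron recurrence through the same rows of
`u` and one row of `v`, and the recurrence becomes a three-term Plücker relation, which is Cramer's
rule.

For `k = min i j = j` the row operations multiply the minor by a full row of `x`, so it is the
rectangle product. For `k = i` one term of the recurrence vanishes, as `i` disjoint paths cannot
cross an antidiagonal inside `i - 1` rows, and what is left is the recursion of the rectangle
products.
-/

open Matrix (detRowAlternating)

section RowDeterminants

variable {R : Type*} [CommRing R]

section Rotation

variable {M N : Type*} [AddCommGroup M] [Module R M] [AddCommGroup N] [Module R N] {k : ℕ}

theorem alternatingMap_snoc (f : M [⋀^Fin (k + 1)]→ₗ[R] N) (B : Fin k → M) (a : M) :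
    f (Fin.snoc B a) = (-1 : R) ^ k • f (Fin.cons a B) := by
  have h := f.map_perm (Fin.cons a B) (finRotate (k + 1))
  rw [sign_finRotate, Nat.add_sub_cancel] at h
  rw [Fin.snoc_eq_cons_rotate]
  refine h.trans ?_
  rcases Nat.even_or_odd k with hk | hk <;> simp [hk.neg_one_pow]

theorem alternatingMap_cons_snoc (f : M [⋀^Fin (k + 2)]→ₗ[R] N) (B : Fin k → M) (a b : M) :
    f (Fin.cons a (Fin.snoc B b)) = (-1 : R) ^ k • f (Fin.cons a (Fin.cons b B)) :=
  alternatingMap_snoc (f.curryLeft a) B b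

theorem alternatingMap_snoc_snoc (f : M [⋀^Fin (k + 2)]→ₗ[R] N) (B : Fin k → M) (a b : M) :
    f (Fin.snoc (Fin.snoc B a) b) = (-1 : R) ^ k • f (Fin.cons a (Fin.snoc B b)) := by
  rw [Fin.cons_snoc_eq_snoc_cons, alternatingMap_snoc, alternatingMap_snoc,
    alternatingMap_cons_snoc, smul_comm]

theorem alternatingMap_cons_add_cons (f : M [⋀^Fin (k + 2)]→ₗ[R] N) (B : Fin k → M) (a b : M) :
    f (Fin.cons (a + b) (Fin.cons a B)) = f (Fin.cons b (Fin.cons a B)) := by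
  have repeated : f (Fin.cons a (Fin.cons a B)) = 0 :=
    f.map_eq_zero_of_eq _ (i := 0) (j := 1) rfl zero_ne_one
  have additive := f.toMultilinearMap.cons_add (Fin.cons a B) a b
  exact additive.trans (by simp [repeated])

end Rotation

theorem detRow_smul_eq_sum_update {n : Type*} [Fintype n] [DecidableEq n] (A : n → n → R)
    (w : n → R) :
    detRowAlternating A • w = ∑ i, detRowAlternating (Function.update A i w) • A i := by
  have cramer := Matrix.mulVec_cramer (Matrix.of A).transpose w
  rw [Matrix.det_transpose] at cramer
  refine cramer.symm.trans ?_
  ext t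
  simp only [Matrix.mulVec, dotProduct, Matrix.transpose_apply, Matrix.of_apply,
    Matrix.cramer_transpose_apply, Matrix.updateRow, Finset.sum_apply, Pi.smul_apply, smul_eq_mul,
    mul_comm]
  rfl

-- Expand `p` in the rows `z, B, q` by Cramer's rule and apply `y ↦ det (y, B, e)`, which kills `B`.
theorem detRow_cons_snoc_mul_cons_snoc {k : ℕ} (B : Fin k → Fin (k + 2) → R)
    (z p q e : Fin (k + 2) → R) :
    detRowAlternating (Fin.cons z (Fin.snoc B q)) * detRowAlternating (Fin.cons p (Fin.snoc B e)) =
      detRowAlternating (Fin.cons p (Fin.snoc B q)) *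
        detRowAlternating (Fin.cons z (Fin.snoc B e)) +
      detRowAlternating (Fin.cons z (Fin.snoc B p)) *
        detRowAlternating (Fin.cons q (Fin.snoc B e)) := by
  let f : (Fin (k + 2) → R) →ₗ[R] R :=
    detRowAlternating.toMultilinearMap.toLinearMap (Fin.cons 0 (Fin.snoc B e)) 0
  have f_apply (y) : f y = detRowAlternating (Fin.cons y (Fin.snoc B e)) := by
    simp [f]
  have f_B (b : Fin k) : f (B b) = 0 := by
    rw [f_apply]
    exact detRowAlternating.map_eq_zero_of_eq _ (i := 0) (j := b.castSucc.succ) (by simp)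
      (Fin.succ_ne_zero _).symm
  have update_last : Function.update (Fin.snoc B q : Fin (k + 1) → Fin (k + 2) → R)
      (Fin.last k) p = Fin.snoc B p := Fin.update_snoc_last ..
  have cramer := congrArg f (detRow_smul_eq_sum_update (Fin.cons z (Fin.snoc B q)) p)
  rw [Fin.sum_univ_succ, Fin.sum_univ_castSucc] at cramer
  simpa [← Fin.cons_update, f_B, update_last, ← f_apply, -Fin.succ_last] using cramer

theorem detRow_plucker {k : ℕ} (B : Fin k → Fin (k + 2) → R) (z p q e : Fin (k + 2) → R) :
    detRowAlternating (Fin.cons z (Fin.snoc B q)) * detRowAlternating (Fin.cons p (Fin.snoc B e)) =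
      detRowAlternating (Fin.cons p (Fin.snoc B q)) *
        detRowAlternating (Fin.cons z (Fin.snoc B e)) +
      detRowAlternating (Fin.snoc (Fin.snoc B q) e) *
        detRowAlternating (Fin.cons z (Fin.cons p B)) := by
  rw [detRow_cons_snoc_mul_cons_snoc, alternatingMap_snoc_snoc,
    alternatingMap_cons_snoc _ B z p]
  simp only [smul_eq_mul]
  ring

theorem detRow_snoc_single_last {k : ℕ} (A : Fin k → Fin (k + 1) → R) :
    detRowAlternating (Fin.snoc A (Pi.single (Fin.last k) 1)) =
      detRowAlternating fun l t => A l t.castSucc := by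
  let S : Matrix (Fin (k + 1)) (Fin (k + 1)) R := Fin.snoc A (Pi.single (Fin.last k) 1)
  have S_last (t) : S (Fin.last k) t = if t = Fin.last k then 1 else 0 := by
    simp [S, Pi.single_apply]
  have S_castSucc (l : Fin k) (t) : S l.castSucc t = A l t := by simp [S]
  change S.det = Matrix.det (Matrix.of fun l t => A l t.castSucc)
  rw [S.det_succ_row (Fin.last k), Finset.sum_eq_single_of_mem (Fin.last k) (Finset.mem_univ _)]
  · simp [Matrix.submatrix, S_last, S_castSucc]
  · intro t _ ht
    simp [S_last, ht]

theorem detRow_eq_prod_mul_of_bidiagonal {k : ℕ} {A B : Fin (k + 1) → Fin (k + 1) → R}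
    (d : Fin (k + 1) → R) (h_zero : A 0 = d 0 • B 0)
    (h_succ : ∀ l : Fin k, A l.succ = d l.succ • (B l.succ + A l.castSucc)) :
    detRowAlternating A = (∏ l, d l) * detRowAlternating B := by
  refine Eq.trans ?_ (Matrix.det_mul_column d (Matrix.of B))
  refine Matrix.det_eq_of_forall_row_eq_smul_add_pred (A := Matrix.of A) (fun l => d l.succ) ?_ ?_
  · simp [h_zero]
  · simp [h_succ, mul_add]

end RowDeterminants

section InitialMinors

variable {R : Type*}

/-- The block of the infinite matrix `w` on the `k` consecutive rows `a, a + 1, …, a + k - 1` and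
the first `n` columns. -/
def rowBlock (w : ℕ → ℕ → R) (a k n : ℕ) : Fin k → Fin n → R :=
  fun l t => w (a + l) t

theorem rowBlock_succ_eq_cons (w : ℕ → ℕ → R) (a k n : ℕ) :
    rowBlock w a (k + 1) n = Fin.cons (fun t : Fin n => w a t) (rowBlock w (a + 1) k n) := by
  ext l t
  cases l using Fin.cases <;> simp [rowBlock, add_assoc, add_comm 1]

theorem rowBlock_succ_eq_snoc (w : ℕ → ℕ → R) (a k n : ℕ) :
    rowBlock w a (k + 1) n = Fin.snoc (rowBlock w a k n) fun t : Fin n => w (a + k) t := by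
  ext l t
  cases l using Fin.lastCases <;> simp [rowBlock]

variable [CommRing R]

/-- The minor of the infinite matrix `w` on the `k` consecutive rows `a, a + 1, …, a + k - 1` and
the first `k` columns. -/
def initialMinor (w : ℕ → ℕ → R) (a k : ℕ) : R :=
  detRowAlternating (rowBlock w a k k)

theorem initialMinor_zero (w : ℕ → ℕ → R) (a : ℕ) : initialMinor w a 0 = 1 :=
  Matrix.det_fin_zero

theorem initialMinor_one (w : ℕ → ℕ → R) (a : ℕ) : initialMinor w a 1 = w a 0 :=
  Matrix.det_fin_one _

theorem initialMinor_eq_snoc_single (w : ℕ → ℕ → R) (a k : ℕ) :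
    initialMinor w a k =
      detRowAlternating (Fin.snoc (rowBlock w a k (k + 1)) (Pi.single (Fin.last k) 1)) := by
  rw [detRow_snoc_single_last]
  rfl

theorem detRow_cons_rowBlock_snoc_single_last (w : ℕ → ℕ → R) (a k : ℕ) (z : Fin (k + 2) → R) :
    detRowAlternating
        (Fin.cons z (Fin.snoc (rowBlock w a k (k + 2)) (Pi.single (Fin.last (k + 1)) 1))) =
      detRowAlternating (Fin.cons (fun t => z t.castSucc) (rowBlock w a k (k + 1))) := by
  rw [Fin.cons_snoc_eq_snoc_cons, detRow_snoc_single_last]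
  congr 1
  ext l t
  cases l using Fin.cases <;> simp [rowBlock]

variable {u v : ℕ → ℕ → R} {y : ℕ → R}

theorem initialMinor_succ_eq_prod_mul
    (h : ∀ c, v (c + 1) = y (c + 1) • (u (c + 1) + v c)) (a k : ℕ) :
    initialMinor v a (k + 1) = (∏ c ∈ Finset.range k, y (a + 1 + c)) *
      detRowAlternating (Fin.cons (fun t => v a t) (rowBlock u (a + 1) k (k + 1))) := by
  rw [← Fin.prod_univ_eq_prod_range fun c => y (a + 1 + c)]
  have bidiagonal := detRow_eq_prod_mul_of_bidiagonal (A := rowBlock v a (k + 1) (k + 1))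
    (B := Fin.cons (fun t => v a t) (rowBlock u (a + 1) k (k + 1)))
    (Fin.cons 1 fun c : Fin k => y (a + 1 + c)) (by ext; simp [rowBlock]) fun l => by
      ext t
      simp [rowBlock, ← add_assoc, h, add_right_comm a 1]
  simpa [initialMinor, Fin.prod_univ_succ] using bidiagonal

theorem initialMinor_add_one_succ_eq_prod_mul
    (h : ∀ c, v (c + 1) = y (c + 1) • (u (c + 1) + v c)) (a k : ℕ) :
    initialMinor v (a + 1) (k + 1) = (∏ c ∈ Finset.range (k + 1), y (a + 1 + c)) *
      detRowAlternating
        (Fin.cons (fun t => u (a + 1) t + v a t) (rowBlock u (a + 2) k (k + 1))) := by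
  rw [← Fin.prod_univ_eq_prod_range fun c => y (a + 1 + c)]
  refine detRow_eq_prod_mul_of_bidiagonal _ (by ext; simp [rowBlock, h]) fun l => ?_
  ext t
  have index : a + 1 + (l + 1 : ℕ) = a + 1 + l + 1 := by ring
  have index' : a + 2 + (l : ℕ) = a + 1 + l + 1 := by ring
  simp [rowBlock, index, index', h (a + 1 + l)]

theorem initialMinor_one_eq_prod_mul (h_zero : v 0 = 0)
    (h : ∀ c, v (c + 1) = y (c + 1) • (u (c + 1) + v c)) (k : ℕ) :
    initialMinor v 1 k = (∏ c ∈ Finset.range k, y (c + 1)) * initialMinor u 1 k := by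
  rcases k with _ | k
  · simp [initialMinor_zero]
  · rw [initialMinor_add_one_succ_eq_prod_mul h 0, initialMinor, rowBlock_succ_eq_cons]
    simp [h_zero, add_comm]

theorem initialMinor_octahedron (h : ∀ c, v (c + 1) = y (c + 1) • (u (c + 1) + v c)) (a k : ℕ) :
    initialMinor v (a + 1) (k + 1) * initialMinor u (a + 1) k =
      y (a + 1 + k) * (initialMinor u (a + 1) (k + 1) * initialMinor v (a + 1) k +
        initialMinor u (a + 2) k * initialMinor v a (k + 1)) := by
  rcases k with _ | k
  · simp [initialMinor_zero, initialMinor_one, h]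
  set p : Fin (k + 2) → R := fun t => u (a + 1) t
  set z : Fin (k + 2) → R := fun t => u (a + 1) t + v a t
  set B := rowBlock u (a + 2) k (k + 2)
  set q : Fin (k + 2) → R := fun t => u (a + 2 + k) t
  set e : Fin (k + 2) → R := Pi.single (Fin.last (k + 1)) 1
  set Y := ∏ c ∈ Finset.range (k + 1), y (a + 1 + c)
  have v_zBq : initialMinor v (a + 1) (k + 2) =
      Y * y (a + 1 + (k + 1)) * detRowAlternating (Fin.cons z (Fin.snoc B q)) := by
    rw [initialMinor_add_one_succ_eq_prod_mul h, Finset.prod_range_succ, rowBlock_succ_eq_snoc]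
  have u_pBe : initialMinor u (a + 1) (k + 1) =
      detRowAlternating (Fin.cons p (Fin.snoc B e)) := by
    rw [initialMinor_eq_snoc_single, rowBlock_succ_eq_cons, Fin.cons_snoc_eq_snoc_cons]
  have u_pBq : initialMinor u (a + 1) (k + 2) =
      detRowAlternating (Fin.cons p (Fin.snoc B q)) := by
    rw [initialMinor, rowBlock_succ_eq_cons, rowBlock_succ_eq_snoc]
  have v_zBe : initialMinor v (a + 1) (k + 1) =
      Y * detRowAlternating (Fin.cons z (Fin.snoc B e)) := by
    rw [initialMinor_add_one_succ_eq_prod_mul h, detRow_cons_rowBlock_snoc_single_last]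
    rfl
  have u_Bqe : initialMinor u (a + 2) (k + 1) =
      detRowAlternating (Fin.snoc (Fin.snoc B q) e) := by
    rw [initialMinor_eq_snoc_single, rowBlock_succ_eq_snoc]
  have v_zpB : initialMinor v a (k + 2) =
      Y * detRowAlternating (Fin.cons z (Fin.cons p B)) := by
    rw [initialMinor_succ_eq_prod_mul h, rowBlock_succ_eq_cons]
    exact congrArg (Y * ·) (alternatingMap_cons_add_cons _ _ _ _).symm
  rw [v_zBq, u_pBe, u_pBq, v_zBe, u_Bqe, v_zpB]
  linear_combination Y * y (a + 1 + (k + 1)) * detRow_plucker B z p q e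

end InitialMinors

section LatticePaths

/-- The lattice paths from `(1, s)` to `q`, as lists of vertices. A path is grown by appending
vertices to the empty path, which is regarded as ending at a virtual starting point `(0, s)`; no
path visits column `0`. -/
def latticePaths (s : ℕ) : ℕ × ℕ → Finset (List (ℕ × ℕ))
  | (0, c) => if c = s then {[]} else ∅
  | (_ + 1, 0) => ∅
  | (r + 1, c + 1) =>
    (latticePaths s (r, c + 1) ∪ latticePaths s (r + 1, c)).image (· ++ [(r + 1, c + 1)])
termination_by q => q.1 + q.2

theorem mem_latticePaths_zero {s c : ℕ} {L : List (ℕ × ℕ)} :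
    L ∈ latticePaths s (0, c) ↔ c = s ∧ L = [] := by
  rw [latticePaths]
  split_ifs with h <;> simp [h]

theorem latticePaths_succ_zero (s r : ℕ) : latticePaths s (r + 1, 0) = ∅ := by
  rw [latticePaths]

theorem mem_latticePaths_succ_succ {s r c : ℕ} {L : List (ℕ × ℕ)} :
    L ∈ latticePaths s (r + 1, c + 1) ↔
      ∃ L', (L' ∈ latticePaths s (r, c + 1) ∨ L' ∈ latticePaths s (r + 1, c)) ∧
        L' ++ [(r + 1, c + 1)] = L := by
  rw [latticePaths]
  simp

theorem le_of_mem_latticePaths {s : ℕ} {q v : ℕ × ℕ} {L : List (ℕ × ℕ)}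
    (hL : L ∈ latticePaths s q) (hv : v ∈ L) : v ≤ q := by
  fun_induction latticePaths s q generalizing L with
  | case1 => simp_all
  | case2 => simp at hL
  | case3 => simp at hL
  | case4 r c ih_row ih_column =>
    obtain ⟨L', hL', rfl⟩ := Finset.mem_image.mp hL
    rcases List.mem_append.mp hv with hv | hv
    · rcases Finset.mem_union.mp hL' with hL' | hL'
      · exact (ih_row hL' hv).trans (by simp [Prod.le_def])
      · exact (ih_column hL' hv).trans (by simp [Prod.le_def])
    · exact (List.mem_singleton.mp hv).le

theorem mem_of_mem_latticePaths_succ {s r c : ℕ} {L : List (ℕ × ℕ)}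
    (hL : L ∈ latticePaths s (r + 1, c)) : (r + 1, c) ∈ L := by
  rcases c with _ | c
  · simp [latticePaths_succ_zero] at hL
  · obtain ⟨L', -, rfl⟩ := mem_latticePaths_succ_succ.mp hL
    simp

theorem exists_mem_antidiagonal_of_mem_latticePaths {s d : ℕ} {q : ℕ × ℕ} {L : List (ℕ × ℕ)}
    (hL : L ∈ latticePaths s q) (hs : s < d) (hd : d ≤ q.1 + q.2) :
    ∃ v ∈ L, v.1 ∈ Finset.Icc 1 q.1 ∧ v.1 + v.2 = d := by
  fun_induction latticePaths s q generalizing L with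
  | case1 => omega
  | case2 => simp at hL
  | case3 => simp at hL
  | case4 r c ih_row ih_column =>
    obtain ⟨L', hL', rfl⟩ := Finset.mem_image.mp hL
    rcases hd.eq_or_lt with rfl | hd
    · exact ⟨(r + 1, c + 1), by simp⟩
    · rcases Finset.mem_union.mp hL' with hL' | hL'
      · obtain ⟨v, hv, hvr, hvd⟩ := ih_row hL' (by dsimp only at hd ⊢; omega)
        exact ⟨v, by simp [hv], by simp only [Finset.mem_Icc] at hvr ⊢; omega, hvd⟩
      · obtain ⟨v, hv, hvr, hvd⟩ := ih_column hL' (by dsimp only at hd ⊢; omega)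
        exact ⟨v, by simp [hv], hvr, hvd⟩

theorem getLastD_of_mem_latticePaths {s : ℕ} {q : ℕ × ℕ} {L : List (ℕ × ℕ)}
    (hL : L ∈ latticePaths s q) : L.getLastD (0, s) = q := by
  obtain ⟨_ | r, _ | c⟩ := q
  · obtain ⟨rfl, rfl⟩ := mem_latticePaths_zero.mp hL
    simp
  · obtain ⟨rfl, rfl⟩ := mem_latticePaths_zero.mp hL
    simp
  · simp [latticePaths_succ_zero] at hL
  · obtain ⟨L', -, rfl⟩ := mem_latticePaths_succ_succ.mp hL
    simp

theorem disjoint_latticePaths (s : ℕ) {q q' : ℕ × ℕ} (h : q ≠ q') :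
    Disjoint (latticePaths s q) (latticePaths s q') :=
  Finset.disjoint_left.mpr fun _ hL hL' =>
    h ((getLastD_of_mem_latticePaths hL).symm.trans (getLastD_of_mem_latticePaths hL'))

variable {R : Type*} [CommSemiring R] (x : ℕ → ℕ → R)

/-- The weight of a path, the product of the weights `x` of its vertices. -/
def pathWeight (L : List (ℕ × ℕ)) : R :=
  (L.map fun v => x v.1 v.2).prod

theorem pathWeight_append_singleton (L : List (ℕ × ℕ)) (v : ℕ × ℕ) :
    pathWeight x (L ++ [v]) = pathWeight x L * x v.1 v.2 := by
  simp [pathWeight]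

/-- The total weight of the lattice paths from `(1, s)` to `q`. -/
def pathSum (s : ℕ) (q : ℕ × ℕ) : R :=
  ∑ L ∈ latticePaths s q, pathWeight x L

theorem pathSum_zero (s c : ℕ) : pathSum x s (0, c) = if c = s then 1 else 0 := by
  rw [pathSum, latticePaths]
  split_ifs <;> simp [pathWeight]

theorem pathSum_succ_zero (s r : ℕ) : pathSum x s (r + 1, 0) = 0 := by
  simp [pathSum, latticePaths_succ_zero]

theorem pathSum_succ_succ (s r c : ℕ) :
    pathSum x s (r + 1, c + 1) =
      x (r + 1) (c + 1) * (pathSum x s (r, c + 1) + pathSum x s (r + 1, c)) := by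
  have disjoint := disjoint_latticePaths s (q := (r, c + 1)) (q' := (r + 1, c)) (by simp)
  rw [pathSum, latticePaths, Finset.sum_image (List.append_left_injective _).injOn,
    Finset.sum_union disjoint, mul_comm, add_mul, pathSum, pathSum, Finset.sum_mul, Finset.sum_mul]
  simp only [pathWeight_append_singleton]

end LatticePaths

section PathFamilies

variable {ι : Type*}

/-- No two of the vertex lists `P l` have a common vertex. -/
def IsVertexDisjoint {α : Type*} (P : ι → List α) : Prop :=
  Pairwise fun l l' => (P l).Disjoint (P l')

/-- The family obtained from `P` by appending the vertex `v` to the path of index `l`. -/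
def extendAt [DecidableEq ι] {α : Type*} (l : ι) (v : α) (P : ι → List α) : ι → List α :=
  Function.update P l (P l ++ [v])

section ExtendAt

variable [DecidableEq ι] {α : Type*}

theorem extendAt_self (l : ι) (v : α) (P : ι → List α) : extendAt l v P l = P l ++ [v] :=
  Function.update_self ..

theorem extendAt_of_ne {l l' : ι} (h : l' ≠ l) (v : α) (P : ι → List α) :
    extendAt l v P l' = P l' :=
  Function.update_of_ne h ..

theorem extendAt_update (l : ι) (v : α) (P : ι → List α) (L : List α) :
    extendAt l v (Function.update P l L) = Function.update P l (L ++ [v]) := by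
  simp [extendAt]

theorem extendAt_injective (l : ι) (v : α) : Function.Injective (extendAt l v) := by
  intro P P' h
  funext l'
  have h_apply := congrFun h l'
  by_cases hl' : l' = l
  · subst hl'
    simpa [extendAt_self] using h_apply
  · simpa [extendAt_of_ne hl'] using h_apply

theorem isVertexDisjoint_extendAt_iff {l : ι} {v : α} {P : ι → List α} :
    IsVertexDisjoint (extendAt l v P) ↔ IsVertexDisjoint P ∧ ∀ l' ≠ l, v ∉ P l' := by
  constructor
  · intro h
    have subset (l') : P l' ⊆ extendAt l v P l' := by
      by_cases hl' : l' = l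
      · subst hl'
        simp [extendAt_self]
      · simp [extendAt_of_ne hl']
    refine ⟨fun a b hab w ha hb => h hab (subset a ha) (subset b hb), fun l' hl' hv => ?_⟩
    exact h hl' (subset l' hv) (by simp [extendAt_self])
  · rintro ⟨h, hv⟩ a b hab
    by_cases ha : a = l
    · subst ha
      rw [extendAt_self, extendAt_of_ne hab.symm]
      simpa using ⟨h hab, hv b hab.symm⟩
    · by_cases hb : b = l
      · subst hb
        rw [extendAt_self, extendAt_of_ne ha]
        simpa using ⟨h hab, hv a ha⟩
      · simpa [extendAt_of_ne ha, extendAt_of_ne hb] using h hab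

end ExtendAt

variable [Fintype ι] [DecidableEq ι]

open Classical in
/-- The families of pairwise vertex-disjoint lattice paths, the `l`-th one going from `(1, σ l)` to
`p l`. -/
noncomputable def pathFamilies (σ : ι → ℕ) (p : ι → ℕ × ℕ) : Finset (ι → List (ℕ × ℕ)) :=
  {P ∈ Fintype.piFinset fun l => latticePaths (σ l) (p l) | IsVertexDisjoint P}

variable {σ : ι → ℕ} {p : ι → ℕ × ℕ} {P : ι → List (ℕ × ℕ)} {l : ι} {r c : ℕ}

theorem mem_pathFamilies :
    P ∈ pathFamilies σ p ↔ (∀ l, P l ∈ latticePaths (σ l) (p l)) ∧ IsVertexDisjoint P := by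
  simp [pathFamilies]

theorem mem_pathFamilies_update {q : ℕ × ℕ} :
    P ∈ pathFamilies σ (Function.update p l q) ↔
      P l ∈ latticePaths (σ l) q ∧ (∀ l' ≠ l, P l' ∈ latticePaths (σ l') (p l')) ∧
        IsVertexDisjoint P := by
  rw [mem_pathFamilies, ← and_assoc,
    Function.forall_update_iff p fun l' q' => P l' ∈ latticePaths (σ l') q']

theorem disjoint_pathFamilies_update {q q' : ℕ × ℕ} (h : q ≠ q') :
    Disjoint (pathFamilies σ (Function.update p l q))
      (pathFamilies σ (Function.update p l q')) :=
  Finset.disjoint_left.mpr fun _ hP hP' =>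
    Finset.disjoint_left.mp (disjoint_latticePaths (σ l) h)
      (mem_pathFamilies_update.mp hP).1 (mem_pathFamilies_update.mp hP').1

-- Only the path of index `l` can reach `p l`, so removing its last vertex loses no disjointness.
theorem pathFamilies_eq_image (hp : p l = (r + 1, c + 1)) (hl : ∀ l', p l ≤ p l' → l' = l) :
    pathFamilies σ p =
      (pathFamilies σ (Function.update p l (r, c + 1)) ∪
        pathFamilies σ (Function.update p l (r + 1, c))).image (extendAt l (r + 1, c + 1)) := by
  ext P
  simp only [Finset.mem_image, Finset.mem_union, mem_pathFamilies_update]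
  constructor
  · intro hP
    obtain ⟨paths, disjoint⟩ := mem_pathFamilies.mp hP
    obtain ⟨L, hL, hLP⟩ := mem_latticePaths_succ_succ.mp (hp ▸ paths l)
    have P_eq : extendAt l (r + 1, c + 1) (Function.update P l L) = P := by
      rw [extendAt_update, hLP, Function.update_eq_self]
    refine ⟨Function.update P l L, ?_, P_eq⟩
    have others (l') (hl' : l' ≠ l) : Function.update P l L l' ∈ latticePaths (σ l') (p l') := by
      rw [Function.update_of_ne hl']
      exact paths l'
    rw [← P_eq, isVertexDisjoint_extendAt_iff] at disjoint
    rw [← or_and_right, Function.update_self]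
    exact ⟨hL, others, disjoint.1⟩
  · rintro ⟨P', hP', rfl⟩
    obtain ⟨last, others, disjoint⟩ := or_and_right.mpr hP'
    rw [mem_pathFamilies, isVertexDisjoint_extendAt_iff]
    refine ⟨fun l' => ?_, disjoint, fun l' hl' hv => ?_⟩
    · by_cases hl' : l' = l
      · subst hl'
        rw [hp, extendAt_self]
        exact mem_latticePaths_succ_succ.mpr ⟨P' l', last, rfl⟩
      · rw [extendAt_of_ne hl']
        exact others l' hl'
    · exact hl' (hl l' (hp ▸ le_of_mem_latticePaths (others l' hl') hv))

theorem pathFamilies_eq_empty_of_apply_eq (hσ : Function.Injective σ) {l l' : ι} (hl : l ≠ l')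
    (hp : p l = p l') : pathFamilies σ p = ∅ := by
  refine Finset.eq_empty_of_forall_notMem fun P hP => ?_
  obtain ⟨paths, disjoint⟩ := mem_pathFamilies.mp hP
  rcases hq : p l with ⟨_ | r, c⟩
  · exact hl (hσ ((mem_latticePaths_zero.mp (hq ▸ paths l)).1.symm.trans
      (mem_latticePaths_zero.mp (hq ▸ hp ▸ paths l')).1))
  · exact disjoint hl (mem_of_mem_latticePaths_succ (hq ▸ paths l))
      (mem_of_mem_latticePaths_succ (hq ▸ hp ▸ paths l'))

-- Every path meets the antidiagonal `r + c = d`, which has only `ρ` points in the rows `1, …, ρ`.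
theorem pathFamilies_eq_empty_of_lt_card {d ρ : ℕ} (hσ : ∀ l, σ l < d)
    (hd : ∀ l, d ≤ (p l).1 + (p l).2) (hρ : ∀ l, (p l).1 ≤ ρ) (h_card : ρ < Fintype.card ι) :
    pathFamilies σ p = ∅ := by
  refine Finset.eq_empty_of_forall_notMem fun P hP => ?_
  obtain ⟨paths, disjoint⟩ := mem_pathFamilies.mp hP
  choose v hv v_row v_diagonal using fun l =>
    exists_mem_antidiagonal_of_mem_latticePaths (paths l) (hσ l) (hd l)
  obtain ⟨l, -, l', -, hl, row_eq⟩ : ∃ l ∈ Finset.univ, ∃ l' ∈ Finset.univ,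
      l ≠ l' ∧ (v l).1 = (v l').1 := by
    refine Finset.exists_ne_map_eq_of_card_lt_of_maps_to (t := Finset.Icc 1 ρ)
      (by simpa using h_card) fun l _ => ?_
    exact Finset.Icc_subset_Icc_right (hρ l) (v_row l)
  have v_eq : v l = v l' := Prod.ext row_eq (by have := v_diagonal l; have := v_diagonal l'; omega)
  exact disjoint hl (hv l) (v_eq ▸ hv l')

variable {R : Type*} [CommSemiring R] (x : ℕ → ℕ → R)

/-- The total weight of the families of pairwise vertex-disjoint lattice paths, the `l`-th one
going from `(1, σ l)` to `p l`. -/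
noncomputable def familySum (σ : ι → ℕ) (p : ι → ℕ × ℕ) : R :=
  ∑ P ∈ pathFamilies σ p, ∏ l, pathWeight x (P l)

theorem prod_pathWeight_extendAt (l : ι) (v : ℕ × ℕ) (P : ι → List (ℕ × ℕ)) :
    ∏ l', pathWeight x (extendAt l v P l') = (∏ l', pathWeight x (P l')) * x v.1 v.2 := by
  have factor (l') : pathWeight x (extendAt l v P l') =
      pathWeight x (P l') * if l' = l then x v.1 v.2 else 1 := by
    split_ifs with hl'
    · subst hl'
      rw [extendAt_self, pathWeight_append_singleton]
    · rw [extendAt_of_ne hl', mul_one]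
  simp only [factor, Finset.prod_mul_distrib, Finset.prod_ite_eq', Finset.mem_univ, if_true]

theorem familySum_eq_mul_add (hp : p l = (r + 1, c + 1)) (hl : ∀ l', p l ≤ p l' → l' = l) :
    familySum x σ p = x (r + 1) (c + 1) *
      (familySum x σ (Function.update p l (r, c + 1)) +
        familySum x σ (Function.update p l (r + 1, c))) := by
  rw [familySum, pathFamilies_eq_image hp hl, Finset.sum_image (extendAt_injective l _).injOn,
    Finset.sum_union (disjoint_pathFamilies_update (by simp))]
  simp only [prod_pathWeight_extendAt, ← Finset.sum_mul, familySum]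
  ring

theorem familySum_eq_zero_of_succ_zero (hp : p l = (r + 1, 0)) : familySum x σ p = 0 := by
  refine Finset.sum_eq_zero fun P hP => ?_
  have path := (mem_pathFamilies.mp hP).1 l
  simp [hp, latticePaths_succ_zero] at path

theorem familySum_zero_row (γ : ι → ℕ) :
    familySum x σ (fun l => (0, γ l)) = if γ = σ then 1 else 0 := by
  split_ifs with h
  · subst h
    have families : pathFamilies γ (fun l => (0, γ l)) = {fun _ => []} := by
      ext P
      simp only [mem_pathFamilies, mem_latticePaths_zero, true_and, Finset.mem_singleton,
        funext_iff]
      exact ⟨And.left, fun h => ⟨h, fun l l' _ => by simp [h]⟩⟩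
    simp [familySum, families, pathWeight]
  · obtain ⟨l, hl⟩ := Function.ne_iff.mp h
    refine Finset.sum_eq_zero fun P hP => absurd ?_ hl
    exact (mem_latticePaths_zero.mp ((mem_pathFamilies.mp hP).1 l)).1

end PathFamilies

section PathDeterminants

variable {ι : Type*} [Fintype ι] [DecidableEq ι] {R : Type*} [CommRing R] (x : ℕ → ℕ → R)
variable {σ : ι → ℕ} {p : ι → ℕ × ℕ} {l : ι} {r c : ℕ}

/-- The determinant of the matrix whose `(l, t)` entry is the total weight of the lattice paths
from `(1, σ t)` to `p l`. -/
def pathDet (σ : ι → ℕ) (p : ι → ℕ × ℕ) : R :=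
  Matrix.det (Matrix.of fun l t => pathSum x (σ t) (p l))

theorem pathDet_update (l : ι) (q : ℕ × ℕ) :
    pathDet x σ (Function.update p l q) =
      Matrix.det (Matrix.updateRow (Matrix.of fun l t => pathSum x (σ t) (p l)) l
        fun t => pathSum x (σ t) q) := by
  unfold pathDet
  congr 1
  ext l' t
  by_cases hl' : l' = l <;> simp [Matrix.updateRow_apply, Function.update_apply, hl']

theorem pathDet_eq_mul_add (hp : p l = (r + 1, c + 1)) :
    pathDet x σ p = x (r + 1) (c + 1) *
      (pathDet x σ (Function.update p l (r, c + 1)) +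
        pathDet x σ (Function.update p l (r + 1, c))) := by
  have row : (fun t => pathSum x (σ t) (r + 1, c + 1)) = x (r + 1) (c + 1) •
      ((fun t => pathSum x (σ t) (r, c + 1)) + fun t => pathSum x (σ t) (r + 1, c)) := by
    funext t
    simp [pathSum_succ_succ]
  have p_eq : p = Function.update p l (r + 1, c + 1) := by rw [← hp, Function.update_eq_self]
  conv_lhs => rw [p_eq]
  simp only [pathDet_update, row, Matrix.det_updateRow_smul, Matrix.det_updateRow_add]

theorem pathDet_eq_zero_of_apply_eq {l l' : ι} (hl : l ≠ l') (hp : p l = p l') :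
    pathDet x σ p = 0 :=
  Matrix.det_zero_of_row_eq hl (by ext; simp [hp])

theorem pathDet_eq_zero_of_succ_zero (hp : p l = (r + 1, 0)) : pathDet x σ p = 0 :=
  Matrix.det_eq_zero_of_row_eq_zero l (by simp [hp, pathSum_succ_zero])

end PathDeterminants

section LindstromGesselViennot

variable {ι : Type*} [LinearOrder ι]

/-- The points `p l` move weakly towards row `0` and weakly away from column `0` as `l` increases:
for such targets and strictly increasing sources, the `l`-th source can only be joined to the
`l`-th target in a vertex-disjoint family. -/
def IsStaircase (p : ι → ℕ × ℕ) : Prop :=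
  ∀ ⦃l l'⦄, l < l' → (p l').1 ≤ (p l).1 ∧ (p l).2 ≤ (p l').2

section Update

variable {p : ι → ℕ × ℕ} {l : ι} {r c : ℕ}

theorem IsStaircase.update (h : IsStaircase p) {q : ℕ × ℕ}
    (h_lt : ∀ l' < l, q.1 ≤ (p l').1 ∧ (p l').2 ≤ q.2)
    (h_gt : ∀ l' > l, (p l').1 ≤ q.1 ∧ q.2 ≤ (p l').2) :
    IsStaircase (Function.update p l q) := by
  intro a b hab
  by_cases ha : a = l
  · subst ha
    simpa [hab.ne'] using h_gt b hab
  · by_cases hb : b = l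
    · subst hb
      simpa [hab.ne] using h_lt a hab
    · simpa [ha, hb] using h hab

theorem IsStaircase.update_pred_row (h : IsStaircase p) (hp : p l = (r + 1, c))
    (hl : ∀ l', p l ≤ p l' → l' = l) : IsStaircase (Function.update p l (r, c)) := by
  refine h.update (fun l' hl' => ?_) fun l' hl' => ?_
  · have := hp ▸ h hl'
    grind
  · have := hp ▸ h hl'
    have := mt (hl l') hl'.ne'
    grind [Prod.le_def]

theorem IsStaircase.update_pred_column (h : IsStaircase p) (hp : p l = (r, c + 1))
    (hl : ∀ l', p l ≤ p l' → l' = l) : IsStaircase (Function.update p l (r, c)) := by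
  refine h.update (fun l' hl' => ?_) fun l' hl' => ?_
  · have := hp ▸ h hl'
    have := mt (hl l') hl'.ne
    grind [Prod.le_def]
  · have := hp ▸ h hl'
    grind

end Update

variable [Fintype ι] {R : Type*} [CommRing R] (x : ℕ → ℕ → R) {σ : ι → ℕ}

theorem pathDet_zero_row (hσ : StrictMono σ) {γ : ι → ℕ} (hγ : StrictMono γ) :
    pathDet x σ (fun l => (0, γ l)) = if γ = σ then 1 else 0 := by
  split_ifs with h
  · subst h
    have one : (Matrix.of fun l t => pathSum x (γ t) (0, γ l)) = 1 := by
      ext l t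
      simp [pathSum_zero, Matrix.one_apply, hγ.injective.eq_iff]
    rw [pathDet, one, Matrix.det_one]
  · obtain ⟨l, hl⟩ : ∃ l, γ l ∉ Set.range σ := by
      by_contra! subset
      have range_eq : Set.range γ = Set.range σ :=
        Set.eq_of_subset_of_ncard_le (Set.range_subset_iff.mpr subset) (by
          simp [← Set.image_univ, Set.ncard_image_of_injective, hσ.injective, hγ.injective])
      exact h ((hγ.range_inj hσ).mp range_eq)
    refine Matrix.det_eq_zero_of_row_eq_zero l fun t => ?_
    have source_ne : γ l ≠ σ t := fun h_eq => hl ⟨t, h_eq.symm⟩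
    simp [pathSum_zero, source_ne]

theorem familySum_eq_pathDet_zero_row (hσ : StrictMono σ) {p : ι → ℕ × ℕ}
    (hp : IsStaircase p) (inj : Function.Injective p) (h : ∀ l, (p l).1 = 0) :
    familySum x σ p = pathDet x σ p := by
  have p_eq : p = fun l => (0, (p l).2) := funext fun l => Prod.ext (h l) rfl
  have mono : StrictMono fun l => (p l).2 := fun l l' hl =>
    (hp hl).2.lt_of_ne fun h_eq => hl.ne (inj (Prod.ext ((h l).trans (h l').symm) h_eq))
  rw [p_eq, familySum_zero_row, pathDet_zero_row x hσ mono]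

theorem familySum_eq_pathDet (hσ : StrictMono σ) {p : ι → ℕ × ℕ} (hp : IsStaircase p) :
    familySum x σ p = pathDet x σ p := by
  induction p using WellFoundedLT.induction with | ind p ih =>
  by_cases inj : Function.Injective p
  swap
  · obtain ⟨l, l', h_eq, hl⟩ := Function.not_injective_iff.mp inj
    rw [pathDet_eq_zero_of_apply_eq x hl h_eq, familySum,
      pathFamilies_eq_empty_of_apply_eq hσ.injective hl h_eq, Finset.sum_empty]
  by_cases zero_row : ∀ l, (p l).1 = 0
  · exact familySum_eq_pathDet_zero_row x hσ hp inj zero_row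
  obtain ⟨l, hl_ne, hl_max⟩ : ∃ l, (p l).1 ≠ 0 ∧ ∀ l', p l ≤ p l' → l' = l := by
    obtain ⟨l, hl, maximal⟩ := (Set.toFinite {l | (p l).1 ≠ 0}).exists_maximalFor p _
      (not_forall.mp zero_row)
    refine ⟨l, hl, fun l' h => inj ((maximal ?_ h).antisymm h)⟩
    exact ((Nat.pos_of_ne_zero hl).trans_le h.1).ne'
  rcases hpl : p l with ⟨_ | r, _ | c⟩
  · simp [hpl] at hl_ne
  · simp [hpl] at hl_ne
  · rw [familySum_eq_zero_of_succ_zero x hpl, pathDet_eq_zero_of_succ_zero x hpl]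
  · rw [familySum_eq_mul_add x hpl hl_max, pathDet_eq_mul_add x hpl,
      ih _ (by simp [hpl]) (hp.update_pred_row hpl hl_max),
      ih _ (by simp [hpl]) (hp.update_pred_column hpl hl_max)]

end LindstromGesselViennot

section GridPaths

variable {m n : ℕ} {src tgt : ℕ × ℕ} {L : List (ℕ × ℕ)}

theorem IsGridPath.tgt_mem (h : IsGridPath m n src tgt L) : tgt ∈ L :=
  List.mem_of_getLast? h.2.1

theorem IsGridPath.one_le_tgt (h : IsGridPath m n src tgt L) : 1 ≤ tgt.1 ∧ 1 ≤ tgt.2 :=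
  ⟨(h.2.2.1 tgt h.tgt_mem).1, (h.2.2.1 tgt h.tgt_mem).2.2.1⟩

theorem gridStep_succ_succ_iff {q : ℕ × ℕ} {r c : ℕ} :
    GridStep q (r + 1, c + 1) ↔ q = (r, c + 1) ∨ q = (r + 1, c) := by
  grind [GridStep]

theorem isGridPath_append_singleton_iff :
    IsGridPath m n src tgt (L ++ [tgt]) ↔
      (1 ≤ tgt.1 ∧ tgt.1 ≤ m ∧ 1 ≤ tgt.2 ∧ tgt.2 ≤ n) ∧
        (L = [] ∧ src = tgt ∨ ∃ q, GridStep q tgt ∧ IsGridPath m n src q L) := by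
  have isGridPath_iff (src tgt L) : IsGridPath m n src tgt L ↔ L.head? = some src ∧
      L.getLast? = some tgt ∧ (∀ v ∈ L, 1 ≤ v.1 ∧ v.1 ≤ m ∧ 1 ≤ v.2 ∧ v.2 ≤ n) ∧
      L.IsChain GridStep := Iff.rfl
  rcases L.eq_nil_or_concat' with rfl | ⟨L, q, rfl⟩
  · simp [isGridPath_iff, and_comm, eq_comm]
  · have head_eq : (L ++ [q] ++ [tgt]).head? = (L ++ [q]).head? := by cases L <;> simp
    have chain_iff : (L ++ [q] ++ [tgt]).IsChain GridStep ↔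
        (L ++ [q]).IsChain GridStep ∧ GridStep q tgt := by
      rw [List.isChain_append]
      simp
    simp only [isGridPath_iff, head_eq, chain_iff, List.getLast?_concat, Option.some.injEq,
      List.forall_mem_append, List.forall_mem_singleton]
    grind

theorem mem_latticePaths_iff_isGridPath {s : ℕ} {q : ℕ × ℕ} (h_pos : 1 ≤ q.1) (h_row : q.1 ≤ m)
    (h_column : q.2 ≤ n) : L ∈ latticePaths s q ↔ IsGridPath m n (1, s) q L := by
  fun_induction latticePaths s q generalizing L with
  | case1 => simp at h_pos
  | case2 => simp at h_pos
  | case3 => simpa using fun h : IsGridPath .. => absurd h.one_le_tgt.2 (by simp)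
  | case4 r c ih_row ih_column =>
    have path_iff (L') : L' ∈ latticePaths s (r, c + 1) ∨ L' ∈ latticePaths s (r + 1, c) ↔
        IsGridPath m n (1, s) (r + 1, c + 1) (L' ++ [(r + 1, c + 1)]) := by
      rw [ih_column h_pos h_row (Nat.le_of_succ_le h_column), isGridPath_append_singleton_iff,
        and_iff_right (by simp_all)]
      simp only [gridStep_succ_succ_iff, or_and_right, exists_or, exists_eq_left]
      rcases r with _ | r
      · have no_path : ¬IsGridPath m n (1, s) (0, c + 1) L' := fun h => by
          simpa using h.one_le_tgt.1
        simp [mem_latticePaths_zero, no_path, and_comm, eq_comm]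
      · simp [ih_row (by simp) (Nat.le_of_succ_le h_row) h_column]
    simp only [Finset.mem_image, Finset.mem_union, path_iff]
    constructor
    · rintro ⟨L', h, rfl⟩
      exact h
    · intro h
      obtain ⟨L', rfl⟩ := List.getLast?_eq_some_iff.mp h.2.1
      exact ⟨L', h, rfl⟩

namespace NCTuple

variable {src tgt : ℕ → ℕ × ℕ} {k : ℕ}

theorem length_path (T : NCTuple m n ((List.range k).map src) ((List.range k).map tgt)) :
    T.path.length = k := by
  simpa using T.hlen

/-- The tuples of `NCTuple`, as vertex-disjoint families of grid paths indexed by `Fin k`. -/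
def equivFamilies (m n k : ℕ) (src tgt : ℕ → ℕ × ℕ) :
    NCTuple m n ((List.range k).map src) ((List.range k).map tgt) ≃
      {P : Fin k → List (ℕ × ℕ) //
        (∀ l : Fin k, IsGridPath m n (src l) (tgt l) (P l)) ∧ IsVertexDisjoint P} where
  toFun T := ⟨fun l => T.path.getD l [], fun l => by
      simpa [List.getD_eq_getElem?_getD] using T.valid l (by simp [T.length_path]),
    fun l l' hl => T.disj l l' (by simp [T.length_path]) (by simp [T.length_path])
      (Fin.val_ne_of_ne hl)⟩
  invFun P :=
    { path := List.ofFn P.1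
      hlen := by simp
      hlen' := by simp
      valid := fun l hl => by
        have hl : l < k := by simpa using hl
        simpa [hl] using P.2.1 ⟨l, hl⟩
      disj := fun l l' hl hl' hne => by
        have hl : l < k := by simpa using hl
        have hl' : l' < k := by simpa using hl'
        have fin_ne : (⟨l, hl⟩ : Fin k) ≠ ⟨l', hl'⟩ := by simpa using hne
        simpa [hl, hl', List.Disjoint] using P.2.2 fin_ne }
  left_inv T := by
    obtain ⟨path, hlen, _, _, _⟩ := T
    obtain rfl : path.length = k := by simpa using hlen
    simp
  right_inv P := by
    simp

theorem prod_map_path {M : Type*} [CommMonoid M] (w : List (ℕ × ℕ) → M)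
    (T : NCTuple m n ((List.range k).map src) ((List.range k).map tgt)) :
    (T.path.map w).prod = ∏ l, w ((equivFamilies m n k src tgt T).1 l) := by
  obtain ⟨path, hlen, _, _, _⟩ := T
  obtain rfl : path.length = k := by simpa using hlen
  simp [equivFamilies, ← List.prod_ofFn]

end NCTuple

theorem ybar_eq_finsum_mem (m n : ℕ) (x : ℕ → ℕ → ℝ) (i j k : ℕ) :
    ybar m n x i j k =
      ∑ᶠ P ∈ {P : Fin k → List (ℕ × ℕ) |
        (∀ l : Fin k, IsGridPath m n (1, l + 1) (i, j - k + (l + 1)) (P l)) ∧ IsVertexDisjoint P},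
        ∏ l, pathWeight x (P l) := by
  refine (finsum_congr (NCTuple.prod_map_path (pathWeight x))).trans ?_
  rw [finsum_comp_equiv (NCTuple.equivFamilies m n k _ _)
    (f := fun P => ∏ l, pathWeight x (P.1 l))]
  exact finsum_set_coe_eq_finsum_mem (f := fun P : Fin k → _ => ∏ l, pathWeight x (P l)) _

theorem ybar_zero (m n : ℕ) (x : ℕ → ℕ → ℝ) (i j : ℕ) : ybar m n x i j 0 = 1 := by
  simp [ybar_eq_finsum_mem, IsVertexDisjoint, finsum_unique]

theorem ybar_eq_familySum (x : ℕ → ℕ → ℝ) {i j k : ℕ} (hi : 1 ≤ i) (him : i ≤ m) (hjn : j ≤ n)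
    (hk : k ≤ j) :
    ybar m n x i j k =
      familySum x (fun l : Fin k => (l + 1 : ℕ)) fun l => (i, j - k + (l + 1)) := by
  rw [ybar_eq_finsum_mem, familySum, ← finsum_mem_coe_finset]
  refine finsum_mem_congr (Set.ext fun P => ?_) fun P _ => rfl
  simp only [Set.mem_ofPred_eq, Finset.mem_coe, mem_pathFamilies]
  refine and_congr_left' (forall_congr' fun l => ?_)
  exact (mem_latticePaths_iff_isGridPath hi him (by dsimp only; omega)).symm

end GridPaths

section PathMinors

variable {R : Type*} [CommRing R] (x : ℕ → ℕ → R)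

/-- The matrix whose `(c, t)` entry is the total weight of the lattice paths from `(1, t + 1)` to
`(i, c)`. -/
def pathRow (i c t : ℕ) : R :=
  pathSum x (t + 1) (i, c)

theorem pathRow_succ_zero (i : ℕ) : pathRow x (i + 1) 0 = 0 :=
  funext fun t => pathSum_succ_zero x (t + 1) i

theorem pathRow_succ_succ (i c : ℕ) :
    pathRow x (i + 1) (c + 1) = x (i + 1) (c + 1) • (pathRow x i (c + 1) + pathRow x (i + 1) c) :=
  funext fun t => pathSum_succ_succ x (t + 1) i c

theorem initialMinor_pathRow_zero (k : ℕ) : initialMinor (pathRow x 0) 1 k = 1 := by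
  have one : Matrix.of (rowBlock (pathRow x 0) 1 k k) = 1 := by
    ext l t
    simp [rowBlock, pathRow, pathSum_zero, Matrix.one_apply, add_comm 1, Fin.val_inj]
  exact (congrArg Matrix.det one).trans Matrix.det_one

theorem initialMinor_pathRow_eq_familySum (i a k : ℕ) :
    initialMinor (pathRow x i) (a + 1) k =
      familySum x (fun l : Fin k => (l + 1 : ℕ)) fun l => (i, a + (l + 1)) := by
  have sources : StrictMono fun l : Fin k => (l + 1 : ℕ) := fun l l' h => by simpa using h
  have targets : IsStaircase fun l : Fin k => (i, a + (l + 1)) := fun l l' h =>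
    ⟨le_rfl, by simpa using h.le⟩
  rw [familySum_eq_pathDet x sources targets]
  refine congrArg Matrix.det ?_
  ext l t
  simp [rowBlock, pathRow, add_comm 1, add_assoc]

theorem initialMinor_pathRow_eq_zero (i a : ℕ) :
    initialMinor (pathRow x i) (a + 2) (i + 1) = 0 := by
  rw [initialMinor_pathRow_eq_familySum, familySum, pathFamilies_eq_empty_of_lt_card (d := i + 2)
    (ρ := i) (fun l => by omega) (fun l => by dsimp only; omega) (fun l => le_rfl) (by simp),
    Finset.sum_empty]

end PathMinors

section RectangleProducts

variable (x : ℕ → ℕ → ℝ)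

theorem rectProd_succ_left (i j : ℕ) :
    rectProd x (i + 1) j = (∏ c ∈ Finset.range j, x (i + 1) (c + 1)) * rectProd x i j := by
  rw [rectProd, Finset.prod_Icc_succ_top (by simp), mul_comm, Finset.range_eq_Ico,
    Finset.prod_Ico_add' (x (i + 1)) 0 j 1]
  rfl

theorem rectProd_zero_left (j : ℕ) : rectProd x 0 j = 1 := by
  simp [rectProd]

theorem rectProd_succ_succ_mul (i j : ℕ) :
    rectProd x (i + 1) (j + 1) * rectProd x i j =
      x (i + 1) (j + 1) * (rectProd x i (j + 1) * rectProd x (i + 1) j) := by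
  rw [rectProd_succ_left, rectProd_succ_left, Finset.prod_range_succ]
  ring

variable {x}

theorem rectProd_ne_zero {i j : ℕ} (hx : ∀ r s, 1 ≤ r → r ≤ i → 1 ≤ s → s ≤ j → x r s ≠ 0) :
    rectProd x i j ≠ 0 := by
  refine Finset.prod_ne_zero_iff.mpr fun r hr => Finset.prod_ne_zero_iff.mpr fun s hs => ?_
  rw [Finset.mem_Icc] at hr hs
  exact hx r s hr.1 hr.2 hs.1 hs.2

variable (x)

theorem initialMinor_pathRow_one (i k : ℕ) :
    initialMinor (pathRow x i) 1 k = rectProd x i k := by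
  induction i with
  | zero => rw [initialMinor_pathRow_zero, rectProd_zero_left]
  | succ i ih =>
    rw [initialMinor_one_eq_prod_mul (pathRow_succ_zero x i) (pathRow_succ_succ x i), ih,
      rectProd_succ_left]

theorem initialMinor_pathRow_self {i a : ℕ}
    (hx : ∀ r s, 1 ≤ r → r ≤ i → 1 ≤ s → s ≤ a + i → x r s ≠ 0) :
    initialMinor (pathRow x i) (a + 1) i = rectProd x i (a + i) := by
  induction i generalizing a with
  | zero => rw [initialMinor_zero, rectProd_zero_left]
  | succ i ih_row =>
    induction a with
    | zero => simpa using initialMinor_pathRow_one x (i + 1) (i + 1)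
    | succ a ih_column =>
      have row_eq : initialMinor (pathRow x i) (a + 2) i = rectProd x i (a + 1 + i) :=
        ih_row fun r s hr hri hs hsa => hx r s hr (by omega) hs (by omega)
      have row_eq_next : initialMinor (pathRow x i) (a + 3) i = rectProd x i (a + 2 + i) :=
        ih_row fun r s hr hri hs hsa => hx r s hr (by omega) hs (by omega)
      have column_eq : initialMinor (pathRow x (i + 1)) (a + 1) (i + 1) =
          rectProd x (i + 1) (a + (i + 1)) :=
        ih_column fun r s hr hri hs hsa => hx r s hr hri hs (by omega)
      have rect_ne_zero : rectProd x i (a + 1 + i) ≠ 0 :=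
        rectProd_ne_zero fun r s hr hri hs hsa => hx r s hr (by omega) hs (by omega)
      have octahedron := initialMinor_octahedron (pathRow_succ_succ x i) (a + 1) i
      rw [initialMinor_pathRow_eq_zero, zero_mul, zero_add, row_eq, row_eq_next, column_eq,
        show a + 1 + 1 + i = a + 1 + i + 1 by ring,
        show a + (i + 1) = a + 1 + i by ring, ← rectProd_succ_succ_mul] at octahedron
      exact mul_right_cancel₀ rect_ne_zero octahedron

end RectangleProducts

section Octahedron

variable {m n : ℕ} (x : ℕ → ℕ → ℝ)

theorem ybar_eq_initialMinor {i j k : ℕ} (a : ℕ) (hi : 1 ≤ i) (him : i ≤ m) (hjn : j ≤ n)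
    (hj : j = a + k) : ybar m n x i j k = initialMinor (pathRow x i) (a + 1) k := by
  rw [ybar_eq_familySum x hi him hjn (by omega), initialMinor_pathRow_eq_familySum,
    show j - k = a by omega]

theorem ybar_octahedron {i a k : ℕ} (hi : 1 ≤ i) (him : i + 1 ≤ m) (han : a + 1 + k + 1 ≤ n) :
    ybar m n x (i + 1) (a + 1 + k + 1) (k + 1) * ybar m n x i (a + 1 + k) k =
      x (i + 1) (a + 1 + k + 1) *
        (ybar m n x i (a + 1 + k + 1) (k + 1) * ybar m n x (i + 1) (a + 1 + k) k +
          ybar m n x i (a + 1 + k + 1) k * ybar m n x (i + 1) (a + 1 + k) (k + 1)) := by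
  have octahedron := initialMinor_octahedron (pathRow_succ_succ x i) (a + 1) k
  rw [show a + 1 + 1 + k = a + 1 + k + 1 by ring] at octahedron
  have hi' : 1 ≤ i + 1 := Nat.le_add_left 1 i
  have him' : i ≤ m := Nat.le_of_succ_le him
  have han' : a + 1 + k ≤ n := Nat.le_of_succ_le han
  rwa [ybar_eq_initialMinor x (a + 1) hi' him han (by ring),
    ybar_eq_initialMinor x (a + 1) hi him' han' (by ring),
    ybar_eq_initialMinor x (a + 1) hi him' han (by ring),
    ybar_eq_initialMinor x (a + 1) hi' him han' (by ring),
    ybar_eq_initialMinor x (a + 2) hi him' han (by ring),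
    ybar_eq_initialMinor x a hi' him han' (by ring)]

theorem ytilde_zero (i j : ℕ) : ytilde m n x i j 0 = 1 / rectProd x i j := by
  rw [ytilde, ybar_zero]

variable {x}

theorem ytilde_min (hx : ∀ r s, 1 ≤ r → r ≤ m → 1 ≤ s → s ≤ n → x r s ≠ 0) {i j : ℕ}
    (hi : 1 ≤ i) (him : i ≤ m) (hjn : j ≤ n) : ytilde m n x i j (min i j) = 1 := by
  have hx_rect (r s) (hr : 1 ≤ r) (hri : r ≤ i) (hs : 1 ≤ s) (hsj : s ≤ j) : x r s ≠ 0 :=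
    hx r s hr (hri.trans him) hs (hsj.trans hjn)
  suffices ybar m n x i j (min i j) = rectProd x i j by
    rw [ytilde, this, div_self (rectProd_ne_zero hx_rect)]
  rcases le_total j i with hji | hij
  · rw [min_eq_right hji, ybar_eq_initialMinor x 0 hi him hjn (zero_add j).symm,
      initialMinor_pathRow_one]
  · obtain ⟨a, rfl⟩ := Nat.exists_eq_add_of_le' hij
    rw [min_eq_left hij, ybar_eq_initialMinor x a hi him hjn rfl,
      initialMinor_pathRow_self x hx_rect]

theorem ytilde_octahedron (hx : ∀ r s, 1 ≤ r → r ≤ m → 1 ≤ s → s ≤ n → x r s ≠ 0) {i j k : ℕ}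
    (hi : 2 ≤ i) (him : i ≤ m) (hjn : j ≤ n) (hk : 1 ≤ k) (hkj : k < j) :
    ytilde m n x i j k * ytilde m n x (i - 1) (j - 1) (k - 1) =
      ytilde m n x (i - 1) j k * ytilde m n x i (j - 1) (k - 1) +
      ytilde m n x (i - 1) j (k - 1) * ytilde m n x i (j - 1) k := by
  obtain ⟨i, rfl⟩ := Nat.exists_eq_add_of_le' (one_le_two.trans hi)
  obtain ⟨k, rfl⟩ := Nat.exists_eq_add_of_le' hk
  obtain ⟨a, rfl⟩ : ∃ a, j = a + 1 + k + 1 := ⟨j - k - 2, by omega⟩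
  have rect_ne_zero {r s : ℕ} (hr : r ≤ m) (hs : s ≤ n) : rectProd x r s ≠ 0 :=
    rectProd_ne_zero fun r' s' hr' hrr' hs' hss' =>
      hx r' s' hr' (hrr'.trans hr) hs' (hss'.trans hs)
  have x_ne_zero : x (i + 1) (a + 1 + k + 1) ≠ 0 :=
    hx _ _ (Nat.le_add_left 1 i) him (Nat.le_add_left 1 _) hjn
  have upper_ne_zero : rectProd x i (a + 1 + k + 1) ≠ 0 := rect_ne_zero (by omega) hjn
  have left_ne_zero : rectProd x (i + 1) (a + 1 + k) ≠ 0 := rect_ne_zero him (by omega)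
  simp only [ytilde, Nat.add_sub_cancel]
  rw [div_mul_div_comm, ybar_octahedron x (by omega) him hjn, rectProd_succ_succ_mul,
    mul_div_mul_left _ _ x_ne_zero]
  field_simp

end Octahedron

theorem stmt_9_general (m n : ℕ) (x : ℕ → ℕ → ℝ)
    (hx : ∀ i j, 1 ≤ i → i ≤ m → 1 ≤ j → j ≤ n → x i j ≠ 0) :
    (∀ i j, ytilde m n x i j 0 = 1 / rectProd x i j) ∧
    (∀ i j, 1 ≤ i → i ≤ m → j ≤ n → ytilde m n x i j (min i j) = 1) ∧
    (∀ i j k, 2 ≤ i → i ≤ m → j ≤ n → 1 ≤ k → k < j →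
      ytilde m n x i j k * ytilde m n x (i - 1) (j - 1) (k - 1) =
        ytilde m n x (i - 1) j k * ytilde m n x i (j - 1) (k - 1) +
        ytilde m n x (i - 1) j (k - 1) * ytilde m n x i (j - 1) k) :=
  ⟨ytilde_zero x, fun _ _ => ytilde_min hx, fun _ _ _ => ytilde_octahedron hx⟩

/-- the normalized array `ỹ` satisfies the boundary conditions and the
octahedron recurrence. -/
theorem stmt_9 (m n : ℕ) (hm : 1 ≤ m) (hn : 1 ≤ n)
    (x : ℕ → ℕ → ℝ) (hx : ∀ i j, 0 < x i j) :
    (∀ i j, 1 ≤ i → i ≤ m → 1 ≤ j → j ≤ n →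
      ytilde m n x i j 0 = 1 / rectProd x i j) ∧
    (∀ i j, 1 ≤ i → i ≤ m → 1 ≤ j → j ≤ n →
      ytilde m n x i j (min i j) = 1) ∧
    (∀ i j k, 2 ≤ i → i ≤ m → 2 ≤ j → j ≤ n → 1 ≤ k → k ≤ min i j - 1 →
      ytilde m n x i j k * ytilde m n x (i - 1) (j - 1) (k - 1) =
        ytilde m n x (i - 1) j k * ytilde m n x i (j - 1) (k - 1) +
        ytilde m n x (i - 1) j (k - 1) * ytilde m n x i (j - 1) k) := by
  obtain ⟨at_zero, at_min, octahedron⟩ := stmt_9_general m n x fun i j _ _ _ _ => (hx i j).ne'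
  exact ⟨fun i j _ _ _ _ => at_zero i j, fun i j hi him _ hjn => at_min i j hi him hjn,
    fun i j k hi him _ hjn hk hkij => octahedron i j k hi him hjn hk (by omega)⟩
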